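/- arXiv:2512.19525 — 5 statements merged into one kernel-verified Lean document; each statement's English description precedes it below -/
import Mathlib

section
/- Mass non-increase (Lemma 4.2): Let (G(t))_{t≥0} be a weak solution of the wave kinetic equation whose weak formulation extends to the constant test function φ ≡ 1, i.e., t ↦ G(t)([0,∞)) is differentiable with derivative ℜ₁[1] + ℜ₂[1] + ℜ₃[1]. Then for all t ≥ 0, G(t)([0,∞)) ≤ G(0)([0,∞)). -/
open MeasureTheory Set Real Filter

noncomputable section

/-- Structural parameters and the dispersion relation of the wave kinetic equation. -/
structure KineticParams where
  δ : ℝ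
  δ' : ℝ
  Cd : ℝ
  Cd' : ℝ
  θ : ℝ
  CA : ℝ
  ϱ : ℝ
  CΘ : ℝ
  CΘ' : ℝ
  μ : ℝ
  c12 : ℝ
  c22 : ℝ
  c31 : ℝ
  /-- the dispersion relation, as a function of the wavenumber modulus -/
  ν : ℝ → ℝ
  /-- the inverse of the dispersion relation on `[0,∞)` -/
  rr : ℝ → ℝ
  /-- `𝔄(ω) = r(ω)²/ν'(r(ω))` -/
  A : ℝ → ℝ
  /-- `Θ(ω) = r(ω)/ν'(r(ω))` -/
  Th : ℝ → ℝ
  hδ : δ ∈ Set.Ico (1/2 : ℝ) 1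
  hδ' : δ' ∈ Set.Ico (1/2 : ℝ) 1
  hCd : 0 < Cd
  hCd' : 0 < Cd'
  hθ : θ ∈ Set.Ioc (0:ℝ) 1
  hCA : 0 < CA
  hϱ : ϱ ∈ Set.Icc (0:ℝ) 1
  hgap : ϱ < 2*δ - 1/2
  hCΘ : 0 < CΘ
  hCΘ' : 0 < CΘ'
  hμ : 0 ≤ μ
  hc12 : 0 < c12
  hc22 : 0 < c22
  hc31 : 0 ≤ c31
  hν0 : ν 0 = 0
  hνC1 : ContDiffOn ℝ 1 ν (Set.Ici 0)
  hνmono : StrictMonoOn ν (Set.Ici 0)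
  hνbij : Set.BijOn ν (Set.Ici 0) (Set.Ici 0)
  hνlb : ∀ x : ℝ, 0 ≤ x → Cd * x ^ (1/δ) ≤ ν x
  hνub : ∀ x : ℝ, 0 ≤ x → ν x ≤ Cd' * x ^ (1/δ')
  hνsuper : ∀ x : ℝ, 0 ≤ x → ∀ y : ℝ, 0 ≤ y → ν x + ν y ≤ ν (x + y)
  hrr : ∀ ω : ℝ, 0 ≤ ω → 0 ≤ rr ω ∧ ν (rr ω) = ω
  hrr' : ∀ x : ℝ, 0 ≤ x → rr (ν x) = x
  hAdef : ∀ ω : ℝ, 0 ≤ ω → A ω = (rr ω)^2 / derivWithin ν (Set.Ici 0) (rr ω)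
  hThdef : ∀ ω : ℝ, 0 ≤ ω → Th ω = rr ω / derivWithin ν (Set.Ici 0) (rr ω)
  hA0 : A 0 = 0
  hAmono : MonotoneOn A (Set.Ici 0)
  hAbound : ∀ ω : ℝ, 0 ≤ ω → 0 ≤ A ω ∧ A ω ≤ CA * ω ^ θ
  hThcont : ContinuousOn Th (Set.Ici 0)
  hThmono : MonotoneOn Th (Set.Ici 0)
  hThbound : ∀ ω : ℝ, 0 ≤ ω → CΘ' * ω ^ ϱ ≤ Th ω ∧ Th ω ≤ CΘ * ω ^ ϱ

/-- The weak form `ℜ₁[φ]` of the 3-wave collision operator `C₁₂`. -/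
def R1 (P : KineticParams) (G : Measure ℝ) (φ : ℝ → ℝ) : ℝ :=
  P.c12 * ∫ p : ℝ × ℝ, P.A (p.1 + p.2) * (φ (p.1 + p.2) - φ p.1 - φ p.2) ∂(G.prod G)
  - 2 * P.c12 * ∫ p : ℝ × ℝ,
      Set.indicator {q : ℝ × ℝ | q.2 ≤ q.1}
        (fun q => P.A (q.1 - q.2) * (φ q.1 - φ (q.1 - q.2) - φ q.2)) p ∂(G.prod G)

/-- The weak form `ℜ₂[φ]` of the 2↔2 collision operator `C₂₂`;
the variables are `p = (ω, ω₁, ω₂)`. -/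
def R2 (P : KineticParams) (G : Measure ℝ) (φ : ℝ → ℝ) : ℝ :=
  P.c22 * ∫ p : ℝ × ℝ × ℝ,
    Set.indicator {q : ℝ × ℝ × ℝ | q.2.2 ≤ q.1 + q.2.1}
      (fun q =>
        P.Th (q.1 + q.2.1 - q.2.2)
        * (max |q.2.1 - q.2.2| |q.2.2 - q.1| / (2 * (q.1 + q.2.1))) ^ P.μ
        * (min (min (P.rr q.1) (P.rr q.2.1)) (min (P.rr q.2.2) (P.rr (q.1 + q.2.1 - q.2.2)))
            / (P.rr q.1 * P.rr q.2.1 * P.rr q.2.2))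
        * (-(φ q.1) - φ q.2.1 + φ q.2.2 + φ (q.1 + q.2.1 - q.2.2))) p
    ∂(G.prod (G.prod G))

/-- The weak form `ℜ₃[φ]` of the 1↔3 collision operator `C₃₁`. -/
def R3 (P : KineticParams) (G : Measure ℝ) (φ : ℝ → ℝ) : ℝ :=
  P.c31 * ∫ p : ℝ × ℝ × ℝ,
      P.A (p.1 + p.2.1 + p.2.2)
      * (φ (p.1 + p.2.1 + p.2.2) - φ p.1 - φ p.2.1 - φ p.2.2) ∂(G.prod (G.prod G))
  - 3 * P.c31 * ∫ p : ℝ × ℝ × ℝ,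
      Set.indicator {q : ℝ × ℝ × ℝ | q.2.1 + q.2.2 ≤ q.1}
        (fun q => P.A (q.1 - q.2.1 - q.2.2)
          * (φ q.1 - φ (q.1 - q.2.1 - q.2.2) - φ q.2.1 - φ q.2.2)) p ∂(G.prod (G.prod G))

/-- A weak solution of the wave kinetic equation: a measurable family of finite nonnegative
Borel measures on `[0,∞)` such that for every compactly supported `C²` test function `φ`
with `φ'(0) = 0` the map `t ↦ ∫ φ dG(t)` is continuously differentiable on `[0,∞)` with
derivative `ℜ₁[φ] + ℜ₂[φ] + ℜ₃[φ]`. -/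
structure IsWeakSolution (P : KineticParams) (G : ℝ → Measure ℝ) : Prop where
  finite : ∀ t : ℝ, IsFiniteMeasure (G t)
  support : ∀ t : ℝ, G t (Set.Iio 0) = 0
  meas : ∀ B : Set ℝ, MeasurableSet B → Measurable fun t => G t B
  weak : ∀ φ : ℝ → ℝ, ContDiff ℝ 2 φ → HasCompactSupport φ → deriv φ 0 = 0 →
    ∀ t : ℝ, 0 ≤ t →
      HasDerivWithinAt (fun s => ∫ ω, φ ω ∂(G s))
        (R1 P (G t) φ + R2 P (G t) φ + R3 P (G t) φ) (Set.Ici 0) t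
  weak_cont : ∀ φ : ℝ → ℝ, ContDiff ℝ 2 φ → HasCompactSupport φ → deriv φ 0 = 0 →
    ContinuousOn (fun t => R1 P (G t) φ + R2 P (G t) φ + R3 P (G t) φ) (Set.Ici 0)

/-- The initial mass `ℳ`. -/
def mass (G : ℝ → Measure ℝ) : ℝ := (G 0 Set.univ).toReal

/-- The initial energy `ℰ`. -/
def energy (G : ℝ → Measure ℝ) : ℝ := ∫ ω : ℝ, ω ∂(G 0)

/-- `T` is an admissible time horizon: `0 ≤ T < T₀` if the condensation time `T₀` is
positive, and `T = 0` if `T₀ = 0`. -/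
def TOk (G : ℝ → Measure ℝ) (T : ℝ) : Prop :=
  0 ≤ T ∧ (T = 0 ∨ ∃ T' : ℝ, T < T' ∧ ∀ t : ℝ, 0 ≤ t → t < T' → G t {0} = 0)

/-- The initial concentration hypothesis with constants `Cini, r₀` and exponent `cini`. -/
def InitConc (G : ℝ → Measure ℝ) (Cini r₀ cini : ℝ) : Prop :=
  0 < Cini ∧ 0 < r₀ ∧ 0 < cini ∧ G 0 {0} = 0 ∧
    ∀ r : ℝ, 0 < r → r < r₀ → ENNReal.ofReal (Cini * r ^ cini) ≤ G 0 (Set.Icc 0 r)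

end

namespace KineticParams

variable (P : KineticParams)

/-- The kernel `𝔄` extended to negative arguments by `𝔄 0 = 0`. -/
def extA (x : ℝ) : ℝ := P.A (max x 0)

theorem extA_of_nonneg {x : ℝ} (hx : 0 ≤ x) : P.extA x = P.A x := by
  rw [extA, max_eq_left hx]

theorem extA_of_nonpos {x : ℝ} (hx : x ≤ 0) : P.extA x = 0 := by
  rw [extA, max_eq_right hx, P.hA0]

theorem extA_monotone : Monotone P.extA := fun x y h =>
  P.hAmono (le_max_right x 0) (le_max_right y 0) (max_le_max_right 0 h)

theorem rr_two_mul_le {ω : ℝ} (hω : 0 ≤ ω) : P.rr (2 * ω) ≤ 2 * P.rr ω := by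
  obtain ⟨h0, h1⟩ := P.hrr ω hω
  obtain ⟨h2, h3⟩ := P.hrr (2 * ω) (by positivity)
  have h4 := P.hνsuper _ h0 _ h0
  refine (P.hνmono.le_iff_le (mem_Ici.2 h2) (mem_Ici.2 (by positivity))).1 ?_
  rw [two_mul (P.rr ω)]
  linarith

theorem A_eq_rr_mul_Th {ω : ℝ} (hω : 0 ≤ ω) : P.A ω = P.rr ω * P.Th ω := by
  rw [P.hAdef ω hω, P.hThdef ω hω]
  ring

theorem Th_nonneg {ω : ℝ} (hω : 0 ≤ ω) : 0 ≤ P.Th ω :=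
  (mul_nonneg P.hCΘ'.le (rpow_nonneg hω _)).trans (P.hThbound ω hω).1

theorem Th_two_mul_le {ω : ℝ} (hω : 0 ≤ ω) :
    P.Th (2 * ω) ≤ P.CΘ * 2 ^ P.ϱ / P.CΘ' * P.Th ω := by
  have h1 := (P.hThbound (2 * ω) (by positivity)).2
  have h2 := (P.hThbound ω hω).1
  rw [mul_rpow (by norm_num) hω] at h1
  have hc := P.hCΘ'
  have hc2 := P.hCΘ
  calc P.Th (2 * ω) ≤ P.CΘ * 2 ^ P.ϱ / P.CΘ' * (P.CΘ' * ω ^ P.ϱ) := by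
        refine h1.trans_eq ?_
        field_simp
    _ ≤ _ := by gcongr

theorem exists_extA_two_mul_le : ∃ K : ℝ, 0 ≤ K ∧ ∀ x, P.extA (2 * x) ≤ K * P.extA x := by
  have hc := P.hCΘ'
  have hc2 := P.hCΘ
  refine ⟨2 * (P.CΘ * 2 ^ P.ϱ / P.CΘ'), by positivity, fun x => ?_⟩
  rcases le_total x 0 with hx | hx
  · rw [P.extA_of_nonpos hx, P.extA_of_nonpos (by linarith), mul_zero]
  · rw [P.extA_of_nonneg hx, P.extA_of_nonneg (by positivity), P.A_eq_rr_mul_Th hx,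
      P.A_eq_rr_mul_Th (by positivity)]
    calc P.rr (2 * x) * P.Th (2 * x)
        ≤ (2 * P.rr x) * (P.CΘ * 2 ^ P.ϱ / P.CΘ' * P.Th x) :=
          mul_le_mul (P.rr_two_mul_le hx) (P.Th_two_mul_le hx) (P.Th_nonneg (by positivity))
            (mul_nonneg zero_le_two (P.hrr x hx).1)
      _ = _ := by ring

end KineticParams

section MonotoneKernel

variable {B : ℝ → ℝ} {K : ℝ} {μ : Measure ℝ} [IsFiniteMeasure μ]

theorem Monotone.nonneg_of_eq_zero (hB : Monotone B) (hB0 : ∀ x ≤ 0, B x = 0) (x : ℝ) :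
    0 ≤ B x := by
  rcases le_total x 0 with h | h
  · exact (hB0 x h).ge
  · exact (hB0 0 le_rfl).ge.trans (hB h)

theorem integrable_four_mul_of_integrable_sub (hB : Monotone B) (hB0 : ∀ x ≤ 0, B x = 0)
    (hK : 0 ≤ K) (hdbl : ∀ x, B (2 * x) ≤ K * B x) {a : ℝ}
    (hdiff : Integrable (fun x => B (x - a)) μ) : Integrable (fun x => B (4 * x)) μ := by
  have hnn := hB.nonneg_of_eq_zero hB0
  have hdbl3 (x : ℝ) : B (8 * x) ≤ K ^ 3 * B x := by
    calc B (8 * x) = B (2 * (2 * (2 * x))) := by ring_nf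
      _ ≤ K * (K * (K * B x)) := by
        refine (hdbl _).trans (mul_le_mul_of_nonneg_left ?_ hK)
        exact (hdbl _).trans (mul_le_mul_of_nonneg_left (hdbl x) hK)
      _ = _ := by ring
  refine ((hdiff.const_mul (K ^ 3)).add (integrable_const (B (8 * a)))).mono'
    (hB.measurable.comp (measurable_const_mul 4)).aestronglyMeasurable (ae_of_all _ fun x => ?_)
  rw [norm_of_nonneg (hnn _)]
  simp only [Pi.add_apply]
  rcases le_total x (2 * a) with h | h
  · exact (hB (by linarith)).trans (le_add_of_nonneg_left (mul_nonneg (by positivity) (hnn _)))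
  · exact ((hB (by linarith)).trans (hdbl3 (x - a))).trans (le_add_of_nonneg_right (hnn _))

theorem two_mul_integral_sub_le (hB : Monotone B) (hB0 : ∀ x ≤ 0, B x = 0)
    (hK : 0 ≤ K) (hdbl : ∀ x, B (2 * x) ≤ K * B x) (hμ : ∀ᵐ x ∂μ, 0 ≤ x) :
    2 * ∫ p : ℝ × ℝ, B (p.1 - p.2) ∂(μ.prod μ) ≤ ∫ p : ℝ × ℝ, B (p.1 + p.2) ∂(μ.prod μ) := by
  have hnn := hB.nonneg_of_eq_zero hB0
  by_cases hdiff : Integrable (fun p : ℝ × ℝ => B (p.1 - p.2)) (μ.prod μ)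
  swap
  · rw [integral_undef hdiff, mul_zero]
    exact integral_nonneg fun p => hnn _
  rcases eq_or_ne μ 0 with rfl | hμ0
  · simp
  have : NeZero μ := ⟨hμ0⟩
  obtain ⟨a, ha⟩ := hdiff.prod_left_ae.exists
  have h4 := integrable_four_mul_of_integrable_sub hB hB0 hK hdbl ha
  have h1 : ∀ᵐ p ∂(μ.prod μ), 0 ≤ p.1 := Measure.quasiMeasurePreserving_fst.ae hμ
  have h2 : ∀ᵐ p ∂(μ.prod μ), 0 ≤ p.2 := Measure.quasiMeasurePreserving_snd.ae hμ
  have hsum : Integrable (fun p : ℝ × ℝ => B (p.1 + p.2)) (μ.prod μ) := by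
    refine ((h4.comp_fst μ).add (h4.comp_snd μ)).mono'
      (hB.measurable.comp (by fun_prop)).aestronglyMeasurable ?_
    filter_upwards [h1, h2] with p hp1 hp2
    rw [norm_of_nonneg (hnn _)]
    simp only [Pi.add_apply]
    rcases le_total p.1 p.2 with h | h
    · exact (hB (by linarith)).trans (le_add_of_nonneg_left (hnn _))
    · exact (hB (by linarith)).trans (le_add_of_nonneg_right (hnn _))
  have hswap : ∫ p : ℝ × ℝ, B (p.2 - p.1) ∂(μ.prod μ) = ∫ p : ℝ × ℝ, B (p.1 - p.2) ∂(μ.prod μ) :=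
    integral_prod_swap (fun p : ℝ × ℝ => B (p.1 - p.2))
  have hdiff' : Integrable (fun p : ℝ × ℝ => B (p.2 - p.1)) (μ.prod μ) := hdiff.swap
  rw [two_mul]
  nth_rewrite 2 [← hswap]
  rw [← integral_add hdiff hdiff']
  refine integral_mono_ae (hdiff.add hdiff') hsum ?_
  filter_upwards [h1, h2] with p hp1 hp2
  rcases le_total p.1 p.2 with h | h
  · rw [hB0 (p.1 - p.2) (by linarith), zero_add]
    exact hB (by linarith)
  · rw [hB0 (p.2 - p.1) (by linarith), add_zero]
    exact hB (by linarith)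

/-- The cyclic shift `(x, y, z) ↦ (y, z, x)`. -/
def cyclicShift : ℝ × ℝ × ℝ ≃ᵐ ℝ × ℝ × ℝ :=
  MeasurableEquiv.prodComm.trans MeasurableEquiv.prodAssoc

theorem measurePreserving_cyclicShift :
    MeasurePreserving cyclicShift (μ.prod (μ.prod μ)) (μ.prod (μ.prod μ)) :=
  (measurePreserving_prodAssoc μ μ μ).comp Measure.measurePreserving_swap

theorem three_mul_integral_sub_le (hB : Monotone B) (hB0 : ∀ x ≤ 0, B x = 0)
    (hK : 0 ≤ K) (hdbl : ∀ x, B (2 * x) ≤ K * B x) (hμ : ∀ᵐ x ∂μ, 0 ≤ x) :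
    3 * ∫ p : ℝ × ℝ × ℝ, B (p.1 - p.2.1 - p.2.2) ∂(μ.prod (μ.prod μ)) ≤
      ∫ p : ℝ × ℝ × ℝ, B (p.1 + p.2.1 + p.2.2) ∂(μ.prod (μ.prod μ)) := by
  have hnn := hB.nonneg_of_eq_zero hB0
  by_cases hdiff : Integrable (fun p : ℝ × ℝ × ℝ => B (p.1 - p.2.1 - p.2.2)) (μ.prod (μ.prod μ))
  swap
  · rw [integral_undef hdiff, mul_zero]
    exact integral_nonneg fun p => hnn _
  rcases eq_or_ne μ 0 with rfl | hμ0
  · simp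
  have : NeZero (μ.prod μ) := ⟨by
    rw [← Measure.measure_univ_ne_zero, ← univ_prod_univ, Measure.prod_prod]
    simpa using hμ0⟩
  obtain ⟨a, ha⟩ := hdiff.prod_left_ae.exists
  simp only [sub_sub] at ha
  have h4 := integrable_four_mul_of_integrable_sub hB hB0 hK hdbl ha
  have h1 : ∀ᵐ p ∂(μ.prod (μ.prod μ)), 0 ≤ p.1 := Measure.quasiMeasurePreserving_fst.ae hμ
  have h2 : ∀ᵐ p ∂(μ.prod (μ.prod μ)), 0 ≤ p.2.1 :=
    Measure.quasiMeasurePreserving_snd.ae (Measure.quasiMeasurePreserving_fst.ae hμ)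
  have h3 : ∀ᵐ p ∂(μ.prod (μ.prod μ)), 0 ≤ p.2.2 :=
    Measure.quasiMeasurePreserving_snd.ae (Measure.quasiMeasurePreserving_snd.ae hμ)
  have hsum : Integrable (fun p : ℝ × ℝ × ℝ => B (p.1 + p.2.1 + p.2.2)) (μ.prod (μ.prod μ)) := by
    refine ((h4.comp_fst (μ.prod μ)).add
      (((h4.comp_fst μ).add (h4.comp_snd μ)).comp_snd μ)).mono'
      (hB.measurable.comp (by fun_prop)).aestronglyMeasurable ?_
    filter_upwards [h1, h2, h3] with p hp1 hp2 hp3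
    rw [norm_of_nonneg (hnn _)]
    simp only [Pi.add_apply]
    have n1 := hnn (4 * p.1)
    have n2 := hnn (4 * p.2.1)
    have n3 := hnn (4 * p.2.2)
    rcases le_total p.1 p.2.1 with h | h <;> rcases le_total p.1 p.2.2 with h' | h' <;>
      rcases le_total p.2.1 p.2.2 with h'' | h'' <;>
      first
      | linarith [hB (show p.1 + p.2.1 + p.2.2 ≤ 4 * p.1 by linarith)]
      | linarith [hB (show p.1 + p.2.1 + p.2.2 ≤ 4 * p.2.1 by linarith)]
      | linarith [hB (show p.1 + p.2.1 + p.2.2 ≤ 4 * p.2.2 by linarith)]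
  have hσ : MeasurePreserving cyclicShift (μ.prod (μ.prod μ)) (μ.prod (μ.prod μ)) :=
    measurePreserving_cyclicShift
  have hdiff' : Integrable (fun p : ℝ × ℝ × ℝ => B (p.2.1 - p.2.2 - p.1)) (μ.prod (μ.prod μ)) :=
    hσ.integrable_comp_of_integrable hdiff
  have hdiff'' : Integrable (fun p : ℝ × ℝ × ℝ => B (p.2.2 - p.1 - p.2.1)) (μ.prod (μ.prod μ)) :=
    hσ.integrable_comp_of_integrable hdiff'
  have hshift : ∫ p : ℝ × ℝ × ℝ, B (p.2.1 - p.2.2 - p.1) ∂(μ.prod (μ.prod μ)) =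
      ∫ p : ℝ × ℝ × ℝ, B (p.1 - p.2.1 - p.2.2) ∂(μ.prod (μ.prod μ)) :=
    hσ.integral_comp' (fun p : ℝ × ℝ × ℝ => B (p.1 - p.2.1 - p.2.2))
  have hshift' : ∫ p : ℝ × ℝ × ℝ, B (p.2.2 - p.1 - p.2.1) ∂(μ.prod (μ.prod μ)) =
      ∫ p : ℝ × ℝ × ℝ, B (p.2.1 - p.2.2 - p.1) ∂(μ.prod (μ.prod μ)) :=
    hσ.integral_comp' (fun p : ℝ × ℝ × ℝ => B (p.2.1 - p.2.2 - p.1))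
  have hle : ∫ p : ℝ × ℝ × ℝ, (B (p.1 - p.2.1 - p.2.2) + B (p.2.1 - p.2.2 - p.1)
      + B (p.2.2 - p.1 - p.2.1)) ∂(μ.prod (μ.prod μ)) ≤
      ∫ p : ℝ × ℝ × ℝ, B (p.1 + p.2.1 + p.2.2) ∂(μ.prod (μ.prod μ)) := by
    refine integral_mono_ae ((hdiff.add hdiff').add hdiff'') hsum ?_
    filter_upwards [h1, h2, h3] with p hp1 hp2 hp3
    have m1 := hB (show p.1 - p.2.1 - p.2.2 ≤ p.1 + p.2.1 + p.2.2 by linarith)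
    have m2 := hB (show p.2.1 - p.2.2 - p.1 ≤ p.1 + p.2.1 + p.2.2 by linarith)
    have m3 := hB (show p.2.2 - p.1 - p.2.1 ≤ p.1 + p.2.1 + p.2.2 by linarith)
    rcases le_total (p.1 - p.2.1 - p.2.2) 0 with h | h
    · rcases le_total (p.2.1 - p.2.2 - p.1) 0 with h' | h'
      · linarith [hB0 _ h, hB0 _ h']
      · linarith [hB0 _ h, hB0 (p.2.2 - p.1 - p.2.1) (by linarith)]
    · linarith [hB0 (p.2.1 - p.2.2 - p.1) (by linarith), hB0 (p.2.2 - p.1 - p.2.1) (by linarith)]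
  rw [integral_add (by exact hdiff.add hdiff') hdiff'', integral_add hdiff hdiff', hshift', hshift] at hle
  linarith

end MonotoneKernel

section ConstantTestFunction

variable (P : KineticParams) {μ : Measure ℝ} [IsFiniteMeasure μ]

theorem R1_one_nonpos (hμ : ∀ᵐ x ∂μ, 0 ≤ x) : R1 P μ (fun _ => 1) ≤ 0 := by
  obtain ⟨K, hK, hdbl⟩ := P.exists_extA_two_mul_le
  have hmain := two_mul_integral_sub_le P.extA_monotone (fun _ => P.extA_of_nonpos) hK hdbl hμ
  have h1 : ∀ᵐ p ∂(μ.prod μ), 0 ≤ p.1 := Measure.quasiMeasurePreserving_fst.ae hμ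
  have h2 : ∀ᵐ p ∂(μ.prod μ), 0 ≤ p.2 := Measure.quasiMeasurePreserving_snd.ae hμ
  have hplus : ∫ p : ℝ × ℝ, P.A (p.1 + p.2) * ((1 : ℝ) - 1 - 1) ∂(μ.prod μ) =
      -∫ p : ℝ × ℝ, P.extA (p.1 + p.2) ∂(μ.prod μ) := by
    rw [← integral_neg]
    refine integral_congr_ae ?_
    filter_upwards [h1, h2] with p hp1 hp2
    rw [P.extA_of_nonneg (by positivity)]
    ring
  have hminus : ∫ p : ℝ × ℝ, indicator {q : ℝ × ℝ | q.2 ≤ q.1}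
      (fun q => P.A (q.1 - q.2) * ((1 : ℝ) - 1 - 1)) p ∂(μ.prod μ) =
      -∫ p : ℝ × ℝ, P.extA (p.1 - p.2) ∂(μ.prod μ) := by
    rw [← integral_neg]
    refine integral_congr_ae (ae_of_all _ fun p => ?_)
    by_cases hp : p.2 ≤ p.1
    · simp only [indicator, mem_ofPred_eq, hp, if_true]
      rw [P.extA_of_nonneg (by linarith)]
      ring
    · simp only [indicator, mem_ofPred_eq, hp, if_false]
      rw [P.extA_of_nonpos (by linarith), neg_zero]
  rw [R1, hplus, hminus]
  nlinarith [P.hc12]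

theorem R2_one (μ : Measure ℝ) : R2 P μ (fun _ => 1) = 0 := by
  simp [R2]

theorem R3_one_nonpos (hμ : ∀ᵐ x ∂μ, 0 ≤ x) : R3 P μ (fun _ => 1) ≤ 0 := by
  obtain ⟨K, hK, hdbl⟩ := P.exists_extA_two_mul_le
  have hmain := three_mul_integral_sub_le P.extA_monotone (fun _ => P.extA_of_nonpos) hK hdbl hμ
  have h1 : ∀ᵐ p ∂(μ.prod (μ.prod μ)), 0 ≤ p.1 := Measure.quasiMeasurePreserving_fst.ae hμ
  have h2 : ∀ᵐ p ∂(μ.prod (μ.prod μ)), 0 ≤ p.2.1 :=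
    Measure.quasiMeasurePreserving_snd.ae (Measure.quasiMeasurePreserving_fst.ae hμ)
  have h3 : ∀ᵐ p ∂(μ.prod (μ.prod μ)), 0 ≤ p.2.2 :=
    Measure.quasiMeasurePreserving_snd.ae (Measure.quasiMeasurePreserving_snd.ae hμ)
  have hplus : ∫ p : ℝ × ℝ × ℝ, P.A (p.1 + p.2.1 + p.2.2) * ((1 : ℝ) - 1 - 1 - 1)
      ∂(μ.prod (μ.prod μ)) =
      -2 * ∫ p : ℝ × ℝ × ℝ, P.extA (p.1 + p.2.1 + p.2.2) ∂(μ.prod (μ.prod μ)) := by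
    rw [← integral_const_mul]
    refine integral_congr_ae ?_
    filter_upwards [h1, h2, h3] with p hp1 hp2 hp3
    rw [P.extA_of_nonneg (by positivity)]
    ring
  have hminus : ∫ p : ℝ × ℝ × ℝ, indicator {q : ℝ × ℝ × ℝ | q.2.1 + q.2.2 ≤ q.1}
      (fun q => P.A (q.1 - q.2.1 - q.2.2) * ((1 : ℝ) - 1 - 1 - 1)) p ∂(μ.prod (μ.prod μ)) =
      -2 * ∫ p : ℝ × ℝ × ℝ, P.extA (p.1 - p.2.1 - p.2.2) ∂(μ.prod (μ.prod μ)) := by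
    rw [← integral_const_mul]
    refine integral_congr_ae (ae_of_all _ fun p => ?_)
    by_cases hp : p.2.1 + p.2.2 ≤ p.1
    · simp only [indicator, mem_ofPred_eq, hp, if_true]
      rw [P.extA_of_nonneg (by linarith)]
      ring
    · simp only [indicator, mem_ofPred_eq, hp, if_false]
      rw [P.extA_of_nonpos (by linarith), mul_zero]
  rw [R3, hplus, hminus]
  nlinarith [P.hc31]

end ConstantTestFunction

/-- **Mass non-increase** (Lemma 4.2): if the weak formulation of a weak solution extends
to the constant test function `φ ≡ 1`, i.e. the total mass `t ↦ G(t)([0,∞))` is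
differentiable with derivative `ℜ₁[1] + ℜ₂[1] + ℜ₃[1]`, then the mass is non-increasing:
`G(t)([0,∞)) ≤ G(0)([0,∞))` for all `t ≥ 0`. -/
theorem mass_nonincrease (P : KineticParams) (G : ℝ → MeasureTheory.Measure ℝ)
    (hG : IsWeakSolution P G)
    (hext : ∀ t : ℝ, 0 ≤ t →
      HasDerivWithinAt (fun s => ((G s) Set.univ).toReal)
        (R1 P (G t) (fun _ => 1) + R2 P (G t) (fun _ => 1) + R3 P (G t) (fun _ => 1))
        (Set.Ici 0) t) :
    ∀ t : ℝ, 0 ≤ t → G t Set.univ ≤ G 0 Set.univ := by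
  have hderiv : ∀ t : ℝ, 0 ≤ t →
      R1 P (G t) (fun _ => 1) + R2 P (G t) (fun _ => 1) + R3 P (G t) (fun _ => 1) ≤ 0 := by
    intro t _
    have := hG.finite t
    have hnn : ∀ᵐ x ∂(G t), 0 ≤ x := by
      rw [ae_iff]
      simpa [Set.Iio] using hG.support t
    linarith [R1_one_nonpos P hnn, R2_one P (G t), R3_one_nonpos P hnn]
  have hanti : AntitoneOn (fun s => ((G s) Set.univ).toReal) (Set.Ici 0) :=
    antitoneOn_of_hasDerivWithinAt_nonpos (convex_Ici 0)
      (fun t ht => (hext t ht).continuousWithinAt)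
      (fun t ht => (hext t (interior_subset ht)).mono interior_subset)
      (fun t ht => hderiv t (interior_subset ht))
  intro t ht
  have := hG.finite t
  have := hG.finite 0
  exact (ENNReal.toReal_le_toReal (measure_ne_top _ _) (measure_ne_top _ _)).1
    (hanti (mem_Ici.2 le_rfl) (mem_Ici.2 ht) ht)
end

section
/- Mass dissipation inequalities for the 3-wave and 1↔3 collision terms (proof of Lemma 4.2): Let 𝔄 : [0,∞) → [0,∞) be nondecreasing with 𝔄(0) = 0, and let H be a finite nonnegative Borel measure on [0,∞). Then ∬_{[0,∞)²} 𝔄(ω₁+ω₂) dH(ω₁) dH(ω₂) ≥ 2 ∬_{{(ω₁,ω₂) : ω₁ ≥ ω₂}} 𝔄(ω₁−ω₂) dH(ω₁) dH(ω₂), and ∭_{[0,∞)³} 𝔄(ω₁+ω₂+ω₃) dH(ω₁) dH(ω₂) dH(ω₃) ≥ 3 ∭_{{(ω₁,ω₂,ω₃) : ω₁ ≥ ω₂+ω₃}} 𝔄(ω₁−ω₂−ω₃) dH(ω₁) dH(ω₂) dH(ω₃). -/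
open MeasureTheory Set

/-- The extension of `A` from `[0,∞)` to an `ℝ≥0∞`-valued function on `ℝ`, constant on `(-∞,0]`. -/
noncomputable def nonnegExtension (A : ℝ → ℝ) (x : ℝ) : ENNReal :=
  ENNReal.ofReal (A (max x 0))

theorem nonnegExtension_of_nonneg (A : ℝ → ℝ) {x : ℝ} (hx : 0 ≤ x) :
    nonnegExtension A x = ENNReal.ofReal (A x) := by
  rw [nonnegExtension, max_eq_left hx]

theorem nonnegExtension_of_nonpos {A : ℝ → ℝ} (hA0 : A 0 = 0) {x : ℝ} (hx : x ≤ 0) :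
    nonnegExtension A x = 0 := by
  rw [nonnegExtension, max_eq_right hx, hA0, ENNReal.ofReal_zero]

theorem monotone_nonnegExtension {A : ℝ → ℝ} (hA : MonotoneOn A (Ici 0)) :
    Monotone (nonnegExtension A) := fun _ _ hxy =>
  ENNReal.ofReal_le_ofReal
    (hA (mem_Ici.2 (le_max_right _ _)) (mem_Ici.2 (le_max_right _ _)) (max_le_max_right 0 hxy))

theorem nonnegExtension_sub_add_le {A : ℝ → ℝ} (hA : MonotoneOn A (Ici 0)) (hA0 : A 0 = 0)
    {x y : ℝ} (hx : 0 ≤ x) (hy : 0 ≤ y) :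
    nonnegExtension A (x - y) + nonnegExtension A (y - x) ≤ nonnegExtension A (x + y) := by
  have hm := monotone_nonnegExtension hA
  rcases le_total x y with h | h
  · rw [nonnegExtension_of_nonpos hA0 (by linarith : x - y ≤ 0), zero_add]
    exact hm (by linarith)
  · rw [nonnegExtension_of_nonpos hA0 (by linarith : y - x ≤ 0), add_zero]
    exact hm (by linarith)

theorem nonnegExtension_sub_sub_add_le {A : ℝ → ℝ} (hA : MonotoneOn A (Ici 0)) (hA0 : A 0 = 0)
    {x y z : ℝ} (hx : 0 ≤ x) (hy : 0 ≤ y) (hz : 0 ≤ z) :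
    nonnegExtension A (x - y - z) + nonnegExtension A (y - z - x) + nonnegExtension A (z - x - y)
      ≤ nonnegExtension A (x + y + z) := by
  have hm := monotone_nonnegExtension hA
  rcases le_total (x - y - z) 0 with h | h
  · rw [nonnegExtension_of_nonpos hA0 h, zero_add]
    rcases le_total (y - z - x) 0 with h' | h'
    · rw [nonnegExtension_of_nonpos hA0 h', zero_add]
      exact hm (by linarith)
    · rw [nonnegExtension_of_nonpos hA0 (by linarith : z - x - y ≤ 0), add_zero]
      exact hm (by linarith)
  · rw [nonnegExtension_of_nonpos hA0 (by linarith : y - z - x ≤ 0),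
      nonnegExtension_of_nonpos hA0 (by linarith : z - x - y ≤ 0), add_zero, add_zero]
    exact hm (by linarith)

/-- The cyclic rotation of the coordinates preserves a triple product measure. -/
theorem measurePreserving_rotate {α : Type*} [MeasurableSpace α] (μ : Measure α) [SFinite μ] :
    MeasurePreserving (fun p : α × α × α => (p.2.1, p.2.2, p.1))
      (μ.prod (μ.prod μ)) (μ.prod (μ.prod μ)) :=
  (measurePreserving_prodAssoc μ μ μ).comp Measure.measurePreserving_swap

/-- **Mass dissipation inequalities** for the 3-wave and 1↔3 collision terms (proof of
Lemma 4.2): for a nondecreasing `𝔄 : [0,∞) → [0,∞)` with `𝔄(0) = 0` and a finite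
nonnegative Borel measure `H` on `[0,∞)`,
`∬ 𝔄(ω₁+ω₂) dH dH ≥ 2 ∬_{ω₁≥ω₂} 𝔄(ω₁−ω₂) dH dH` and
`∭ 𝔄(ω₁+ω₂+ω₃) dH dH dH ≥ 3 ∭_{ω₁≥ω₂+ω₃} 𝔄(ω₁−ω₂−ω₃) dH dH dH`. -/
theorem mass_dissipation (A : ℝ → ℝ)
    (hAmono : MonotoneOn A (Set.Ici 0)) (hA0 : A 0 = 0)
    (hApos : ∀ x : ℝ, 0 ≤ x → 0 ≤ A x)
    (H : Measure ℝ) (hfin : IsFiniteMeasure H) (hsupp : H (Set.Iio 0) = 0) :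
    (2 * ∫⁻ p : ℝ × ℝ in {q : ℝ × ℝ | q.2 ≤ q.1},
        ENNReal.ofReal (A (p.1 - p.2)) ∂(H.prod H)
      ≤ ∫⁻ p : ℝ × ℝ, ENNReal.ofReal (A (p.1 + p.2)) ∂(H.prod H)) ∧
    (3 * ∫⁻ p : ℝ × ℝ × ℝ in {q : ℝ × ℝ × ℝ | q.2.1 + q.2.2 ≤ q.1},
        ENNReal.ofReal (A (p.1 - p.2.1 - p.2.2)) ∂(H.prod (H.prod H))
      ≤ ∫⁻ p : ℝ × ℝ × ℝ,
          ENNReal.ofReal (A (p.1 + p.2.1 + p.2.2)) ∂(H.prod (H.prod H))) := by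
  have hm : Measurable (nonnegExtension A) := (monotone_nonnegExtension hAmono).measurable
  have hH : ∀ᵐ x ∂H, 0 ≤ x := by
    simp only [ae_iff, not_le]
    exact hsupp
  have hfst {β : Type} [MeasurableSpace β] (ν : Measure β) [SFinite ν] :
      ∀ᵐ p ∂H.prod ν, 0 ≤ p.1 := Measure.quasiMeasurePreserving_fst.ae hH
  have hHH : ∀ᵐ p ∂H.prod H, 0 ≤ p.1 ∧ 0 ≤ p.2 :=
    (hfst H).and (Measure.quasiMeasurePreserving_snd.ae hH)
  have hHHH : ∀ᵐ p ∂H.prod (H.prod H), 0 ≤ p.1 ∧ 0 ≤ p.2.1 ∧ 0 ≤ p.2.2 :=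
    (hfst (H.prod H)).and (Measure.quasiMeasurePreserving_snd.ae hHH)
  constructor
  · let f : ℝ × ℝ → ENNReal := fun p => nonnegExtension A (p.1 - p.2)
    have hf : Measurable f := hm.comp (by fun_prop)
    have hle : ∫⁻ p in {q : ℝ × ℝ | q.2 ≤ q.1}, ENNReal.ofReal (A (p.1 - p.2)) ∂H.prod H
        ≤ ∫⁻ p, f p ∂H.prod H := by
      refine le_trans (setLIntegral_mono hf fun p hp => ?_) (setLIntegral_le_lintegral _ _)
      exact (nonnegExtension_of_nonneg A (sub_nonneg.2 hp)).ge
    have hswap := (Measure.measurePreserving_swap (μ := H) (ν := H)).lintegral_comp hf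
    calc _ ≤ 2 * ∫⁻ p, f p ∂H.prod H := by gcongr
      _ = ∫⁻ p, f p + f p.swap ∂H.prod H := by
        rw [lintegral_add_left hf, hswap, two_mul]
      _ ≤ _ := by
        refine lintegral_mono_ae (hHH.mono fun p hp => ?_)
        rw [← nonnegExtension_of_nonneg A (add_nonneg hp.1 hp.2)]
        exact nonnegExtension_sub_add_le hAmono hA0 hp.1 hp.2
  · let f : ℝ × ℝ × ℝ → ENNReal := fun p => nonnegExtension A (p.1 - p.2.1 - p.2.2)
    have hf : Measurable f := hm.comp (by fun_prop)
    have hle : ∫⁻ p in {q : ℝ × ℝ × ℝ | q.2.1 + q.2.2 ≤ q.1},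
        ENNReal.ofReal (A (p.1 - p.2.1 - p.2.2)) ∂H.prod (H.prod H)
        ≤ ∫⁻ p, f p ∂H.prod (H.prod H) := by
      refine le_trans (setLIntegral_mono hf fun p hp => ?_) (setLIntegral_le_lintegral _ _)
      have hp' : p.2.1 + p.2.2 ≤ p.1 := hp
      exact (nonnegExtension_of_nonneg A (by linarith)).ge
    have hrot := measurePreserving_rotate H
    have hrot₁ := hrot.lintegral_comp hf
    have hrot₂ := (hrot.comp hrot).lintegral_comp hf
    have hf₂ : Measurable fun p : ℝ × ℝ × ℝ => f (p.2.2, p.1, p.2.1) :=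
      hf.comp (hrot.comp hrot).measurable
    calc _ ≤ 3 * ∫⁻ p, f p ∂H.prod (H.prod H) := by gcongr
      _ = ∫⁻ p, f p + f (p.2.1, p.2.2, p.1) + f (p.2.2, p.1, p.2.1) ∂H.prod (H.prod H) := by
        simp only [Function.comp_apply] at hrot₂
        rw [lintegral_add_right _ hf₂, lintegral_add_left hf, hrot₁, hrot₂]
        ring
      _ ≤ _ := by
        refine lintegral_mono_ae (hHHH.mono fun p ⟨hx, hy, hz⟩ => ?_)
        rw [← nonnegExtension_of_nonneg A (add_nonneg (add_nonneg hx hy) hz)]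
        exact nonnegExtension_sub_sub_add_le hAmono hA0 hx hy hz
end

section
/- Supersolution lemma (Lemma 7.1): Let T₁ > 0 and let 𝒦 : [0,T₁] × [0,∞) → [0,∞) be measurable such that for each t the function z ↦ 𝒦(t,z)(1+z) is integrable on [0,∞) and the map t ↦ ∫₀^∞ 𝒦(t,z) z dz is continuous on [0,T₁]. Let 𝒫 : [0,∞) → [0,∞) be bounded, continuously differentiable and convex (equivalently, 𝒫′(z₁+z₂) ≥ 𝒫′(z₁) for all z₁, z₂ ≥ 0). Define 𝕏(t) = ∫_t^{T₁} ∫₀^∞ 𝒦(s,z) z dz ds, 𝕐(t) = ∫₀^t ∫₀^∞ 𝒦(s,z) z dz ds, and ψ(t,x) = e^{𝕐(t)} 𝒫(𝕏(t) + x). Then ψ is a supersolution of the transport-jump equation: for every t ∈ (0,T₁) and every x ≥ 0, ∂_t ψ(t,x) + ∫₀^∞ 𝒦(t,z)(ψ(t,x+z) − ψ(t,x)) dz ≥ 0. -/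
open MeasureTheory Set Real

noncomputable section

/-- `𝕏(t) = ∫_t^{T₁} ∫₀^∞ 𝒦(s,z) z dz ds`. -/
def XX (K : ℝ → ℝ → ℝ) (T₁ t : ℝ) : ℝ :=
  ∫ s in t..T₁, ∫ z in Set.Ici (0:ℝ), K s z * z

/-- `𝕐(t) = ∫₀^t ∫₀^∞ 𝒦(s,z) z dz ds`. -/
def YY (K : ℝ → ℝ → ℝ) (t : ℝ) : ℝ :=
  ∫ s in (0:ℝ)..t, ∫ z in Set.Ici (0:ℝ), K s z * z

/-- `ψ(t,x) = e^{𝕐(t)} 𝒫(𝕏(t) + x)`. -/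
def superSol (K : ℝ → ℝ → ℝ) (T₁ : ℝ) (P : ℝ → ℝ) (t x : ℝ) : ℝ :=
  Real.exp (YY K t) * P (XX K T₁ t + x)

end

lemma deriv_mul_le_sub_of_deriv_le {P : ℝ → ℝ} (hP : Differentiable ℝ P) {w : ℝ}
    (hconv : ∀ z : ℝ, 0 ≤ z → deriv P w ≤ deriv P (w + z)) {z : ℝ} (hz : 0 ≤ z) :
    deriv P w * z ≤ P (w + z) - P w := by
  have h := (convex_Icc w (w + z)).mul_sub_le_image_sub_of_le_deriv (f := P) (C := deriv P w)
    hP.continuous.continuousOn hP.differentiableOn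
    (fun y hy => by
      have hy' := interior_subset hy
      simpa using hconv (y - w) (sub_nonneg.2 hy'.1))
    w (left_mem_Icc.2 (by linarith)) (w + z) (right_mem_Icc.2 (by linarith)) (by linarith)
  simpa using h

/-- A weight `k ≥ 0` with `k(z)(1+z)` integrable on `[0,∞)` is integrable against every `g`
of at most linear growth. -/
lemma integrable_mul_of_abs_le {k g : ℝ → ℝ} (hk : Measurable k) (hkpos : ∀ z, 0 ≤ k z)
    (hkint : Integrable (fun z => k z * (1 + z)) (volume.restrict (Ici 0)))
    (hg : Measurable g) {C : ℝ} (hgC : ∀ z, 0 ≤ z → |g z| ≤ C * (1 + z)) :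
    Integrable (fun z => k z * g z) (volume.restrict (Ici 0)) := by
  refine (hkint.const_mul C).mono' (hk.mul hg).aestronglyMeasurable ?_
  filter_upwards [ae_restrict_mem measurableSet_Ici] with z hz
  rw [norm_mul, Real.norm_eq_abs, Real.norm_eq_abs, abs_of_nonneg (hkpos z)]
  calc k z * |g z| ≤ k z * (C * (1 + z)) := mul_le_mul_of_nonneg_left (hgC z hz) (hkpos z)
    _ = C * (k z * (1 + z)) := by ring

/-- `∫₀^∞ k(z) (P(w+z) - P(w)) dz` dominates its tangent-line value for bounded convex `P`. -/
lemma integral_mul_deriv_le_integral_jump {k P : ℝ → ℝ} (hk : Measurable k)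
    (hkpos : ∀ z, 0 ≤ k z)
    (hkint : Integrable (fun z => k z * (1 + z)) (volume.restrict (Ici 0)))
    (hP : Differentiable ℝ P) (hPpos : ∀ x : ℝ, 0 ≤ x → 0 ≤ P x)
    {M : ℝ} (hM : ∀ x : ℝ, 0 ≤ x → P x ≤ M) {w : ℝ} (hw : 0 ≤ w)
    (hconv : ∀ z : ℝ, 0 ≤ z → deriv P w ≤ deriv P (w + z)) :
    (∫ z in Ici (0:ℝ), k z * z) * deriv P w ≤ ∫ z in Ici (0:ℝ), k z * (P (w + z) - P w) := by
  have hlin : Integrable (fun z => k z * z) (volume.restrict (Ici 0)) :=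
    integrable_mul_of_abs_le (C := 1) hk hkpos hkint measurable_id
      (fun z hz => by rw [abs_of_nonneg hz]; linarith)
  have hjump : Integrable (fun z => k z * (P (w + z) - P w)) (volume.restrict (Ici 0)) := by
    have hPm : Measurable P := hP.continuous.measurable
    refine integrable_mul_of_abs_le (C := M) hk hkpos hkint (by fun_prop) fun z hz => ?_
    have hwz : 0 ≤ w + z := add_nonneg hw hz
    have hMz : 0 ≤ M * z := mul_nonneg ((hPpos w hw).trans (hM w hw)) hz
    rw [abs_le]
    constructor <;> linarith [hPpos w hw, hM w hw, hPpos _ hwz, hM _ hwz]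
  rw [← integral_mul_const]
  refine setIntegral_mono_on (hlin.mul_const _) hjump measurableSet_Ici fun z hz => ?_
  calc k z * z * deriv P w = k z * (deriv P w * z) := by ring
    _ ≤ _ := mul_le_mul_of_nonneg_left (deriv_mul_le_sub_of_deriv_le hP hconv hz) (hkpos z)

/-- `∂_t ψ = e^{𝕐} a (𝒫 - 𝒫')(𝕏 + x)` with `a(t) = ∫₀^∞ 𝒦(t,z) z dz`. -/
lemma hasDerivAt_superSol {T₁ : ℝ} {K : ℝ → ℝ → ℝ} {P : ℝ → ℝ}
    (hKcont : ContinuousOn (fun t => ∫ z in Ici (0:ℝ), K t z * z) (Icc 0 T₁))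
    (hP : Differentiable ℝ P) {t : ℝ} (ht : t ∈ Ioo (0:ℝ) T₁) (x : ℝ) :
    HasDerivAt (fun s => superSol K T₁ P s x)
      (Real.exp (YY K t) * (∫ z in Ici (0:ℝ), K t z * z) *
        (P (XX K T₁ t + x) - deriv P (XX K T₁ t + x))) t := by
  have hmeas : StronglyMeasurableAtFilter (fun t => ∫ z in Ici (0:ℝ), K t z * z) (nhds t) :=
    (hKcont.mono Ioo_subset_Icc_self).stronglyMeasurableAtFilter isOpen_Ioo t ht
  have hcont : ContinuousAt (fun t => ∫ z in Ici (0:ℝ), K t z * z) t :=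
    hKcont.continuousAt (Icc_mem_nhds ht.1 ht.2)
  have hY : HasDerivAt (YY K) (∫ z in Ici (0:ℝ), K t z * z) t :=
    intervalIntegral.integral_hasDerivAt_right
      ((hKcont.mono (Icc_subset_Icc_right ht.2.le)).intervalIntegrable_of_Icc ht.1.le) hmeas hcont
  have hX : HasDerivAt (XX K T₁) (-∫ z in Ici (0:ℝ), K t z * z) t :=
    intervalIntegral.integral_hasDerivAt_left
      ((hKcont.mono (Icc_subset_Icc_left ht.1.le)).intervalIntegrable_of_Icc ht.2.le) hmeas hcont
  have hPX := (hP (XX K T₁ t + x)).hasDerivAt.comp t (hX.add_const x)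
  refine (hY.exp.mul hPX).congr_deriv ?_
  simp only [Function.comp_apply]
  ring

/-- **Supersolution lemma** (Lemma 7.1): under the stated hypotheses on the kernel `𝒦`
and on the bounded `C¹` convex function `𝒫`, the function
`ψ(t,x) = e^{𝕐(t)} 𝒫(𝕏(t)+x)` is a supersolution of the transport-jump equation:
`∂_t ψ(t,x) + ∫₀^∞ 𝒦(t,z)(ψ(t,x+z) − ψ(t,x)) dz ≥ 0` for `t ∈ (0,T₁)` and `x ≥ 0`. -/
theorem supersolution_lemma (T₁ : ℝ) (hT₁ : 0 < T₁) (K : ℝ → ℝ → ℝ)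
    (hKmeas : Measurable (Function.uncurry K))
    (hKpos : ∀ t z : ℝ, 0 ≤ K t z)
    (hKint : ∀ t ∈ Set.Icc (0:ℝ) T₁,
      Integrable (fun z => K t z * (1 + z)) (volume.restrict (Set.Ici 0)))
    (hKcont : ContinuousOn (fun t => ∫ z in Set.Ici (0:ℝ), K t z * z) (Set.Icc 0 T₁))
    (P : ℝ → ℝ)
    (hPpos : ∀ x : ℝ, 0 ≤ x → 0 ≤ P x)
    (hPbdd : ∃ M : ℝ, ∀ x : ℝ, 0 ≤ x → P x ≤ M)
    (hPC1 : ContDiff ℝ 1 P)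
    (hPconv : ∀ z₁ : ℝ, 0 ≤ z₁ → ∀ z₂ : ℝ, 0 ≤ z₂ → deriv P z₁ ≤ deriv P (z₁ + z₂)) :
    ∀ t ∈ Set.Ioo (0:ℝ) T₁, ∀ x : ℝ, 0 ≤ x →
      0 ≤ deriv (fun s => superSol K T₁ P s x) t
          + ∫ z in Set.Ici (0:ℝ),
              K t z * (superSol K T₁ P t (x + z) - superSol K T₁ P t x) := by
  intro t ht x hx
  obtain ⟨M, hM⟩ := hPbdd
  have hP : Differentiable ℝ P := hPC1.differentiable one_ne_zero
  have ha (s : ℝ) : 0 ≤ ∫ z in Set.Ici (0:ℝ), K s z * z :=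
    setIntegral_nonneg measurableSet_Ici fun z hz => mul_nonneg (hKpos s z) hz
  have hw : 0 ≤ XX K T₁ t + x :=
    add_nonneg (intervalIntegral.integral_nonneg ht.2.le fun s _ => ha s) hx
  have hjump := integral_mul_deriv_le_integral_jump (hKmeas.of_uncurry_left (x := t)) (hKpos t)
    (hKint t (Ioo_subset_Icc_self ht)) hP hPpos hM hw (hPconv _ hw)
  have hψ : (∫ z in Set.Ici (0:ℝ),
        K t z * (superSol K T₁ P t (x + z) - superSol K T₁ P t x)) =
      Real.exp (YY K t) * ∫ z in Set.Ici (0:ℝ),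
        K t z * (P (XX K T₁ t + x + z) - P (XX K T₁ t + x)) := by
    rw [← integral_const_mul]
    congr 1 with z
    simp only [superSol, ← add_assoc]
    ring
  rw [(hasDerivAt_superSol hKcont hP ht x).deriv, hψ, mul_assoc, ← mul_add]
  refine mul_nonneg (Real.exp_nonneg _) ?_
  linarith [mul_nonneg (ha t) (hPpos _ hw)]
end

section
/- Quadruple sine integral, balanced regime (used in the weak formulation of the 2↔2 operator, Lemma 3.2): For all real numbers a, b, c, d with 0 < a ≤ b ≤ c ≤ d and a + d ≤ b + c, the function s ↦ sin(a s) sin(b s) sin(c s) sin(d s)/s² is absolutely integrable on (0,∞) and ∫₀^∞ sin(a s) sin(b s) sin(c s) sin(d s)/s² ds = (π/4)·a, i.e., π/4 times the minimum of a, b, c, d. -/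
open Real MeasureTheory

/-- The Laplace transform of `1 - cos`, multiplied by the Laplace variable. -/
lemma integrableOn_and_integral_mul_one_sub_cos_mul_exp {t : ℝ} (ht : 0 < t) :
    IntegrableOn (fun s : ℝ => t * (1 - cos s) * exp (-(s * t))) (Set.Ioi 0) ∧
      ∫ s in Set.Ioi (0 : ℝ), t * (1 - cos s) * exp (-(s * t)) = (1 + t ^ 2)⁻¹ := by
  have hpos : (1 + t ^ 2) ≠ 0 := by positivity
  let G : ℝ → ℝ := fun s =>
    exp (-(s * t)) * (-1 + (t ^ 2 * cos s - t * sin s) / (1 + t ^ 2))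
  have hderiv (s : ℝ) : HasDerivAt G (t * (1 - cos s) * exp (-(s * t))) s := by
    have he : HasDerivAt (fun s : ℝ => exp (-(s * t))) (exp (-(s * t)) * -(1 * t)) s :=
      ((hasDerivAt_id s).mul_const t).neg.exp
    have htrig : HasDerivAt (fun s : ℝ => -1 + (t ^ 2 * cos s - t * sin s) / (1 + t ^ 2))
        ((t ^ 2 * -sin s - t * cos s) / (1 + t ^ 2)) s :=
      ((((hasDerivAt_cos s).const_mul (t ^ 2)).sub
        ((hasDerivAt_sin s).const_mul t)).div_const _).const_add _
    refine (he.mul htrig).congr_deriv ?_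
    field_simp
    ring
  have hexp : Filter.Tendsto (fun s : ℝ => exp (-(s * t))) Filter.atTop (nhds 0) :=
    tendsto_exp_neg_atTop_nhds_zero.comp (Filter.tendsto_id.atTop_mul_const ht)
  have hlim : Filter.Tendsto G Filter.atTop (nhds 0) := by
    refine hexp.zero_mul_isBoundedUnder_le ⟨1 + (t ^ 2 + t) / (1 + t ^ 2), ?_⟩
    refine Filter.eventually_map.2 (Filter.Eventually.of_forall fun s => ?_)
    have hcos := abs_le.1 (abs_cos_le_one s)
    have hsin := abs_le.1 (abs_sin_le_one s)
    have hnum : |t ^ 2 * cos s - t * sin s| ≤ t ^ 2 + t :=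
      abs_le.2 ⟨by nlinarith [sq_nonneg t], by nlinarith [sq_nonneg t]⟩
    calc |-1 + (t ^ 2 * cos s - t * sin s) / (1 + t ^ 2)|
        ≤ |(-1 : ℝ)| + |(t ^ 2 * cos s - t * sin s) / (1 + t ^ 2)| := abs_add_le _ _
      _ = 1 + |t ^ 2 * cos s - t * sin s| / (1 + t ^ 2) := by
        rw [abs_div, abs_of_pos (by positivity : 0 < 1 + t ^ 2)]
        norm_num
      _ ≤ 1 + (t ^ 2 + t) / (1 + t ^ 2) := by gcongr
  have hint : IntegrableOn (fun s : ℝ => t * (1 - cos s) * exp (-(s * t))) (Set.Ioi 0) :=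
    integrableOn_Ioi_deriv_of_nonneg' (fun s _ => hderiv s)
      (fun s _ => mul_nonneg (mul_nonneg ht.le (sub_nonneg.2 (cos_le_one s))) (exp_nonneg _)) hlim
  refine ⟨hint, ?_⟩
  rw [integral_Ioi_of_hasDerivAt_of_tendsto' (fun s _ => hderiv s) hint hlim]
  simp only [G, zero_mul, neg_zero, exp_zero, cos_zero, sin_zero]
  field_simp
  ring

lemma integral_mul_exp_neg_mul_Ioi {s : ℝ} (hs : 0 < s) :
    ∫ t in Set.Ioi (0 : ℝ), t * exp (-(s * t)) = 1 / s ^ 2 := by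
  have h := integral_rpow_mul_exp_neg_mul_Ioi two_pos hs
  norm_num at h
  simpa using h

lemma integrableOn_and_integral_one_sub_cos_div_sq :
    IntegrableOn (fun s : ℝ => (1 - cos s) / s ^ 2) (Set.Ioi 0) ∧
      ∫ s in Set.Ioi (0 : ℝ), (1 - cos s) / s ^ 2 = π / 2 := by
  let F : ℝ → ℝ → ℝ := fun s t => t * (1 - cos s) * exp (-(s * t))
  have hcont : Continuous (Function.uncurry F) := by
    simp only [F, Function.uncurry_def]
    fun_prop
  have hF : Integrable (Function.uncurry F)
      ((volume.restrict (Set.Ioi 0)).prod (volume.restrict (Set.Ioi 0))) := by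
    refine (integrable_prod_iff' hcont.aestronglyMeasurable).2 ⟨?_, ?_⟩
    · filter_upwards [ae_restrict_mem measurableSet_Ioi] with t ht
      exact (integrableOn_and_integral_mul_one_sub_cos_mul_exp ht).1
    · refine IntegrableOn.congr_fun (f := fun t : ℝ => (1 + t ^ 2)⁻¹)
        integrable_inv_one_add_sq.integrableOn (fun t ht => ?_) measurableSet_Ioi
      have ht' : 0 < t := ht
      simp only [← (integrableOn_and_integral_mul_one_sub_cos_mul_exp ht').2]
      refine integral_congr_ae (Filter.Eventually.of_forall fun s => ?_)
      exact (norm_of_nonneg (mul_nonneg (mul_nonneg ht'.le (sub_nonneg.2 (cos_le_one s)))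
        (exp_nonneg _))).symm
  have hinner : Set.EqOn (fun s => ∫ t in Set.Ioi (0 : ℝ), F s t)
      (fun s => (1 - cos s) / s ^ 2) (Set.Ioi 0) := fun s hs => by
    calc ∫ t in Set.Ioi (0 : ℝ), F s t
        = ∫ t in Set.Ioi (0 : ℝ), (1 - cos s) * (t * exp (-(s * t))) := by
          congr 1
          ext t
          simp only [F]
          ring
      _ = (1 - cos s) / s ^ 2 := by
        rw [integral_const_mul, integral_mul_exp_neg_mul_Ioi hs, mul_one_div]
  refine ⟨IntegrableOn.congr_fun hF.integral_prod_left hinner measurableSet_Ioi, ?_⟩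
  rw [← setIntegral_congr_fun measurableSet_Ioi hinner, integral_integral_swap hF,
    setIntegral_congr_fun measurableSet_Ioi
      fun t ht => (integrableOn_and_integral_mul_one_sub_cos_mul_exp ht).2]
  simp

lemma integrableOn_and_integral_one_sub_cos_mul_div_sq (k : ℝ) :
    IntegrableOn (fun s : ℝ => (1 - cos (k * s)) / s ^ 2) (Set.Ioi 0) ∧
      ∫ s in Set.Ioi (0 : ℝ), (1 - cos (k * s)) / s ^ 2 = π / 2 * |k| := by
  rcases eq_or_ne k 0 with rfl | hk
  · simp
  have hk' : 0 < |k| := abs_pos.2 hk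
  have hscale : (fun s : ℝ => (1 - cos (k * s)) / s ^ 2) =
      fun s => |k| ^ 2 * ((1 - cos (|k| * s)) / (|k| * s) ^ 2) := by
    ext s
    have hcos : cos (|k| * s) = cos (k * s) := by
      rw [← cos_abs (k * s), ← cos_abs (|k| * s), abs_mul, abs_mul, abs_abs]
    rw [hcos, mul_pow, ← mul_div_assoc, mul_div_mul_left _ _ (by positivity)]
  obtain ⟨hint, hval⟩ := integrableOn_and_integral_one_sub_cos_div_sq
  rw [hscale]
  constructor
  · refine Integrable.const_mul ?_ _
    exact (integrableOn_Ioi_comp_mul_left_iff (fun s : ℝ => (1 - cos s) / s ^ 2) 0 hk').2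
      (by simpa using hint)
  · rw [integral_const_mul,
      integral_comp_mul_left_Ioi (fun s : ℝ => (1 - cos s) / s ^ 2) 0 hk', mul_zero, hval,
      smul_eq_mul]
    field_simp

lemma integrableOn_and_integral_cos_sub_cos_div_sq (k l : ℝ) :
    IntegrableOn (fun s : ℝ => (cos (k * s) - cos (l * s)) / s ^ 2) (Set.Ioi 0) ∧
      ∫ s in Set.Ioi (0 : ℝ), (cos (k * s) - cos (l * s)) / s ^ 2 = π / 2 * (|l| - |k|) := by
  obtain ⟨hk, hk'⟩ := integrableOn_and_integral_one_sub_cos_mul_div_sq k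
  obtain ⟨hl, hl'⟩ := integrableOn_and_integral_one_sub_cos_mul_div_sq l
  have heq : (fun s : ℝ => (cos (k * s) - cos (l * s)) / s ^ 2) =
      fun s => (1 - cos (l * s)) / s ^ 2 - (1 - cos (k * s)) / s ^ 2 := by
    ext s
    ring
  rw [heq]
  exact ⟨hl.sub hk, by rw [integral_sub hl hk, hk', hl']; ring⟩

lemma sin_mul_sin_mul_sin_mul_sin (x y z w : ℝ) :
    sin x * sin y * sin z * sin w =
      1 / 8 * ((cos (x - y + z - w) - cos (x - y + z + w)) +
        (cos (x - y - z + w) - cos (x - y - z - w)) +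
        (cos (x + y + z + w) - cos (x + y + z - w)) +
        (cos (x + y - z - w) - cos (x + y - z + w))) := by
  simp only [cos_add, cos_sub, sin_add, sin_sub]
  ring

/-- **Quadruple sine integral, balanced regime** (Lemma 3.2): for `0 < a ≤ b ≤ c ≤ d` with
`a + d ≤ b + c`, the function `s ↦ sin(as) sin(bs) sin(cs) sin(ds)/s²` is absolutely
integrable on `(0,∞)` and its integral equals `(π/4)·a`, i.e. `π/4` times
`min{a,b,c,d}`. -/
theorem quadruple_sine_integral_balanced (a b c d : ℝ) (ha : 0 < a)
    (hab : a ≤ b) (hbc : b ≤ c) (hcd : c ≤ d) (hbal : a + d ≤ b + c) :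
    IntegrableOn
      (fun s : ℝ => Real.sin (a*s) * Real.sin (b*s) * Real.sin (c*s) * Real.sin (d*s) / s^2)
      (Set.Ioi 0) ∧
    ∫ s in Set.Ioi (0:ℝ),
        Real.sin (a*s) * Real.sin (b*s) * Real.sin (c*s) * Real.sin (d*s) / s^2
      = Real.pi / 4 * a := by
  have heq : (fun s : ℝ => sin (a*s) * sin (b*s) * sin (c*s) * sin (d*s) / s^2) = fun s =>
      1 / 8 * ((cos ((a - b + c - d) * s) - cos ((a - b + c + d) * s)) / s ^ 2 +
        (cos ((a - b - c + d) * s) - cos ((a - b - c - d) * s)) / s ^ 2 +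
        (cos ((a + b + c + d) * s) - cos ((a + b + c - d) * s)) / s ^ 2 +
        (cos ((a + b - c - d) * s) - cos ((a + b - c + d) * s)) / s ^ 2) := by
    ext s
    rw [sin_mul_sin_mul_sin_mul_sin]
    simp only [sub_mul, add_mul]
    ring
  obtain ⟨h₁, v₁⟩ := integrableOn_and_integral_cos_sub_cos_div_sq (a - b + c - d) (a - b + c + d)
  obtain ⟨h₂, v₂⟩ := integrableOn_and_integral_cos_sub_cos_div_sq (a - b - c + d) (a - b - c - d)
  obtain ⟨h₃, v₃⟩ := integrableOn_and_integral_cos_sub_cos_div_sq (a + b + c + d) (a + b + c - d)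
  obtain ⟨h₄, v₄⟩ := integrableOn_and_integral_cos_sub_cos_div_sq (a + b - c - d) (a + b - c + d)
  rw [heq]
  refine ⟨(((h₁.add h₂).add h₃).add h₄).const_mul _, ?_⟩
  rw [integral_const_mul, integral_add (by exact (h₁.add h₂).add h₃) h₄,
    integral_add (by exact h₁.add h₂) h₃,
    integral_add h₁ h₂, v₁, v₂, v₃, v₄,
    abs_of_nonpos (by linarith : a - b + c - d ≤ 0),
    abs_of_nonneg (by linarith : 0 ≤ a - b + c + d),
    abs_of_nonpos (by linarith : a - b - c + d ≤ 0),
    abs_of_nonpos (by linarith : a - b - c - d ≤ 0),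
    abs_of_nonneg (by linarith : 0 ≤ a + b + c + d),
    abs_of_nonneg (by linarith : 0 ≤ a + b + c - d),
    abs_of_nonpos (by linarith : a + b - c - d ≤ 0),
    abs_of_nonneg (by linarith : 0 ≤ a + b - c + d)]
  ring
end

section
/- Weighted concavity inequality (core of the C₂₂ estimate in the proof of Lemma 4.1): Let φ : [0,∞) → ℝ be concave, let Θ : [0,∞) → [0,∞) be nondecreasing, and let 0 ≤ a ≤ b ≤ c. Then Θ(c+a−b)·(φ(b) + φ(c+a−b) − φ(c) − φ(a)) + Θ(c+b−a)·(φ(a) + φ(c+b−a) − φ(c) − φ(b)) ≤ Θ(c+b−a)·(φ(c+a−b) + φ(c+b−a) − 2φ(c)). -/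
/-- Among pairs of points with a fixed sum, a concave function has the larger sum of values at
the inner pair. -/
theorem ConcaveOn.add_le_add_of_mem_Icc {s : Set ℝ} {f : ℝ → ℝ} (hf : ConcaveOn ℝ s f)
    {a b c : ℝ} (ha : a ∈ s) (hc : c ∈ s) (hab : a ≤ b) (hbc : b ≤ c) :
    f a + f c ≤ f b + f (c + a - b) := by
  obtain ⟨u, v, hu, hv, huv, rfl⟩ : b ∈ segment ℝ a c := by
    rw [segment_eq_Icc (hab.trans hbc)]
    exact ⟨hab, hbc⟩
  have inner := hf.2 ha hc hu hv huv
  have reflected := hf.2 ha hc hv hu (by rwa [add_comm])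
  have reflect_eq : c + a - (u • a + v • c) = v • a + u • c := by
    simp only [smul_eq_mul]
    linear_combination (-(a + c)) * huv
  rw [reflect_eq]
  simp only [smul_eq_mul] at inner reflected ⊢
  linear_combination inner + reflected - (f a + f c) * huv

/-- **Weighted concavity inequality** (core of the `C₂₂` estimate in the proof of
Lemma 4.1): for a concave `φ : [0,∞) → ℝ`, a nondecreasing `Θ : [0,∞) → [0,∞)` and
`0 ≤ a ≤ b ≤ c`,
`Θ(c+a−b)(φ(b) + φ(c+a−b) − φ(c) − φ(a)) + Θ(c+b−a)(φ(a) + φ(c+b−a) − φ(c) − φ(b))`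
`≤ Θ(c+b−a)(φ(c+a−b) + φ(c+b−a) − 2φ(c))`. -/
theorem weighted_concavity (φ : ℝ → ℝ) (hφ : ConcaveOn ℝ (Set.Ici 0) φ)
    (Θ : ℝ → ℝ) (hΘmono : MonotoneOn Θ (Set.Ici 0))
    (hΘpos : ∀ x : ℝ, 0 ≤ x → 0 ≤ Θ x)
    (a b c : ℝ) (ha : 0 ≤ a) (hab : a ≤ b) (hbc : b ≤ c) :
    Θ (c + a - b) * (φ b + φ (c + a - b) - φ c - φ a)
      + Θ (c + b - a) * (φ a + φ (c + b - a) - φ c - φ b)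
    ≤ Θ (c + b - a) * (φ (c + a - b) + φ (c + b - a) - 2 * φ c) := by
  have hφ_le := hφ.add_le_add_of_mem_Icc (Set.mem_Ici.2 ha)
    (Set.mem_Ici.2 (ha.trans (hab.trans hbc))) hab hbc
  have hΘ_le : Θ (c + a - b) ≤ Θ (c + b - a) :=
    hΘmono (Set.mem_Ici.2 (by linarith)) (Set.mem_Ici.2 (by linarith)) (by linarith)
  linear_combination mul_nonneg (sub_nonneg.2 hΘ_le) (sub_nonneg.2 hφ_le)
end
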